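/- arXiv:2212.14172 — 2 statements merged into one kernel-verified Lean document; each statement's English description precedes it below -/
import Mathlib

section
/- If every right module over a ring A is semidistributive (a direct sum of distributive modules), then every ring that is Morita equivalent to A is a right Koethe ring, i.e., every right module over every ring Morita equivalent to A is a direct sum of cyclic modules. -/
/-!
A Morita equivalence induces isomorphisms between the submodule lattices of corresponding modules,
so semidistributivity of all modules passes from `A` to `B` (`semidistributive_transfer`). It
remains to see that, over a ring all of whose modules are semidistributive, every distributive
module is cyclic. Right `B`-modules are treated as left modules over `R = Bᵐᵒᵖ`.

Distributive modules over `R` have bounded cardinality (`exists_bound`). If `M` is distributive and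
`x, y ∈ M`, then `1 = a + (1 - a)` with `ax ∈ Ry` and `(1 - a)y ∈ Rx`; this condition shows that
colouring each pair `(x, y)` by its annihilator in `R × R` produces no monochromatic triangle, and
the Erdős–Rado argument bounds `M` in terms of the set of colours.

A decomposition of `∏_{n ∈ ℕ} R^(List T)`, for `T` at least as large as every distributive module,
into summands covered by `T` then forces, by Chase's argument, descending chains of principal right
ideals of `R` to stabilise (`chain_stabilises`, `minCondition`). By Bass's arguments, with `J` the
Jacobson radical of `R`, the ring `R ⧸ J` is semisimple (`isSemisimpleRing_quotient_jacobson`) and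
`JK = K` implies `K = 0` for every module `K` (`subsingleton_of_jacobson_smul_eq_top`).

For a distributive module `M`, the quotient `M ⧸ JM` is distributive over the semisimple ring
`R ⧸ J`, so an element with minimal annihilator generates it
(`exists_generator_of_isSemisimpleRing`), and a lift of this element generates `M`
(`exists_generator`).
-/

universe u

open Submodule

/-- A module `M` is `ℵ₀`-distributive if no subfactor of `M` (quotient of a submodule)
is (isomorphic to) a direct sum of infinitely many pairwise isomorphic simple modules.
The direct sum condition is phrased internally: the subfactor has no independent spanning
family, indexed by an infinite type, of pairwise isomorphic simple submodules. -/
def IsAleph0Distributive (R M : Type u) [Ring R] [AddCommGroup M] [Module R M] : Prop :=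
  ¬ ∃ (N : Submodule R M) (P : Submodule R N) (ι : Type u) (_ : Infinite ι)
      (T : ι → Submodule R (N ⧸ P)),
      iSupIndep T ∧ iSup T = ⊤ ∧ (∀ i, IsSimpleModule R (T i)) ∧
        ∀ i j, Nonempty ((T i) ≃ₗ[R] (T j))

/-- A module is distributive if its lattice of submodules is distributive. -/
def IsDistributiveModule (R M : Type u) [Ring R] [AddCommGroup M] [Module R M] : Prop :=
  ∀ X Y Z : Submodule R M, X ⊓ (Y ⊔ Z) = X ⊓ Y ⊔ X ⊓ Z

/-- A module is completely cyclic if every submodule is cyclic. -/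
def IsCompletelyCyclic (R M : Type u) [Ring R] [AddCommGroup M] [Module R M] : Prop :=
  ∀ N : Submodule R M, ∃ m : M, N = span R {m}

/-- A module is Bezout if every finitely generated submodule is cyclic. -/
def IsBezoutModule (R M : Type u) [Ring R] [AddCommGroup M] [Module R M] : Prop :=
  ∀ N : Submodule R M, N.FG → ∃ m : M, N = span R {m}

/-- A ring satisfies the minimum condition on principal right ideals if there is no
infinite strictly descending chain of principal right ideals. -/
def MinPrincipalRight (A : Type u) [Ring A] : Prop :=
  ¬ ∃ a : ℕ → A, StrictAnti fun n => span Aᵐᵒᵖ ({a n} : Set A)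

/-- A ring satisfies the minimum condition on principal left ideals if there is no
infinite strictly descending chain of principal left ideals. -/
def MinPrincipalLeft (A : Type u) [Ring A] : Prop :=
  ¬ ∃ a : ℕ → A, StrictAnti fun n => span A ({a n} : Set A)

/-- A module is indecomposable if it is nonzero and is not the direct sum of two
nonzero submodules. -/
def IsIndecomposableModule (R M : Type u) [Ring R] [AddCommGroup M] [Module R M] : Prop :=
  Nontrivial M ∧ ∀ N P : Submodule R M, IsCompl N P → N = ⊥ ∨ P = ⊥

/-- A ring `A` has (right) finite representation type if it is right Artinian and has,
up to isomorphism, only finitely many finitely generated indecomposable right modules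
(every finitely generated module is isomorphic to a quotient of some `Aⁿ`, so the
representatives may be taken of this form). -/
def HasFiniteRepresentationType (A : Type u) [Ring A] : Prop :=
  IsArtinian Aᵐᵒᵖ A ∧
    ∃ (n : ℕ) (k : Fin n → ℕ) (N : ∀ i, Submodule Aᵐᵒᵖ (Fin (k i) → A)),
      ∀ (M : Type u) [AddCommGroup M] [Module Aᵐᵒᵖ M],
        Module.Finite Aᵐᵒᵖ M → IsIndecomposableModule Aᵐᵒᵖ M →
          ∃ i, Nonempty (M ≃ₗ[Aᵐᵒᵖ] ((Fin (k i) → A) ⧸ N i))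

/-- `M` has only finitely many simple subfactors up to isomorphism. -/
def FinitelyManySimpleSubfactors (R M : Type u) [Ring R] [AddCommGroup M] [Module R M] : Prop :=
  ∃ (n : ℕ) (N : Fin n → Submodule R M) (P : ∀ i, Submodule R (N i)),
    ∀ (N' : Submodule R M) (P' : Submodule R N'), IsSimpleModule R (N' ⧸ P') →
      ∃ i, Nonempty ((N' ⧸ P') ≃ₗ[R] (N i ⧸ P i))

/-- A module is semi-Artinian if every nonzero quotient module contains a simple submodule. -/
def IsSemiArtinianModule (R M : Type u) [Ring R] [AddCommGroup M] [Module R M] : Prop :=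
  ∀ N : Submodule R M, N ≠ ⊤ → ∃ S : Submodule R (M ⧸ N), IsSimpleModule R S

/-- A ring is semilocal if its quotient by the Jacobson radical is semisimple. -/
def IsSemilocalRing (A : Type u) [Ring A] : Prop :=
  IsSemisimpleModule A (A ⧸ Ideal.jacobson (⊥ : Ideal A))

/-- A ring is semiprimary if it is semilocal and its Jacobson radical is nilpotent. -/
def IsSemiprimaryRing' (A : Type u) [Ring A] : Prop :=
  IsSemilocalRing A ∧ ∃ n : ℕ, 0 < n ∧ ∀ f : Fin n → A,
    (∀ i, f i ∈ Ideal.jacobson (⊥ : Ideal A)) → (List.ofFn f).prod = 0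

namespace Semidistributive

/-! ### Distributive modules: an elementwise condition and a cardinality bound -/

/-- An elementwise form of distributivity: any two cyclic submodules `Rx`, `Ry` admit a
splitting `1 = a + (1 - a)` with `ax ∈ Ry` and `(1 - a)y ∈ Rx`. -/
def ElementwiseDistributive (R M : Type u) [Ring R] [AddCommGroup M] [Module R M] : Prop :=
  ∀ x y : M, ∃ a b c : R, a • x = b • y ∧ (1 - a) • y = c • x

section Elementwise

variable {R M : Type u} [Ring R] [AddCommGroup M] [Module R M]

theorem elementwiseDistributive (h : IsDistributiveModule R M) :
    ElementwiseDistributive R M := by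
  intro x y
  have hmem : x + y ∈ span R {x + y} ⊓ (span R {x} ⊔ span R {y}) :=
    ⟨mem_span_singleton_self _, add_mem_sup (mem_span_singleton_self _)
      (mem_span_singleton_self _)⟩
  rw [h, mem_sup] at hmem
  obtain ⟨p, ⟨hp, hpx⟩, q, ⟨hq, hqy⟩, hpq⟩ := hmem
  obtain ⟨u, rfl⟩ := mem_span_singleton.1 hp
  obtain ⟨v, rfl⟩ := mem_span_singleton.1 hq
  obtain ⟨d, hd⟩ := mem_span_singleton.1 hpx
  obtain ⟨e, he⟩ := mem_span_singleton.1 hqy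
  -- `u(x + y) ∈ Rx` gives `uy ∈ Rx`; `(1 - u)(x + y) = v(x + y) ∈ Ry` gives `(1 - u)x ∈ Ry`.
  refine ⟨1 - u, e - (1 - u), d - u, ?_, ?_⟩
  · have : (1 - u) • (x + y) = e • y := by
      rw [he, sub_smul, one_smul]; exact sub_eq_of_eq_add' hpq.symm
    rw [smul_add] at this
    rw [sub_smul e, ← this, add_sub_cancel_right]
  · have : u • x + u • y = d • x := by rw [hd, smul_add]
    rw [sub_smul d, ← this, sub_sub_cancel]; abel

theorem ElementwiseDistributive.quotient (h : ElementwiseDistributive R M) (N : Submodule R M) :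
    ElementwiseDistributive R (M ⧸ N) := by
  intro x y
  obtain ⟨x, rfl⟩ := N.mkQ_surjective x
  obtain ⟨y, rfl⟩ := N.mkQ_surjective y
  obtain ⟨a, b, c, h1, h2⟩ := h x y
  exact ⟨a, b, c, by simp only [← map_smul, h1], by simp only [← map_smul, h2]⟩

/-- The annihilator in `R × R` of a pair of elements. -/
def pairAnn (R : Type u) {M : Type u} [Ring R] [AddCommGroup M] [Module R M] (x y : M) :
    Set (R × R) :=
  {p | p.1 • x + p.2 • y = 0}

/-- In a distributive module there is no monochromatic triangle for the colouring of pairs by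
their annihilators. -/
theorem ElementwiseDistributive.eq_of_pairAnn_eq (h : ElementwiseDistributive R M) {x y z : M}
    (h1 : pairAnn R x z = pairAnn R y z) (h2 : pairAnn R x y = pairAnn R x z) : y = z := by
  obtain ⟨a, b, c, hab, hc⟩ := h x y
  have key : ∀ r s : R, r • x + s • y = 0 → r • x + s • z = 0 ∧ r • y + s • z = 0 := by
    intro r s hrs
    have m1 : (r, s) ∈ pairAnn R x y := hrs
    have m2 : (r, s) ∈ pairAnn R x z := h2 ▸ m1
    exact ⟨m2, (h1 ▸ m2 : (r, s) ∈ pairAnn R y z)⟩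
  have ann : ∀ r : R, r • y = 0 → r • z = 0 := by
    intro r hr
    simpa using (key 0 r (by simpa using hr)).1
  obtain ⟨k1, k2⟩ := key a (-b) (by rw [hab]; simp)
  obtain ⟨k3, k4⟩ := key (-c) (1 - a) (by rw [hc]; simp)
  have e1 : b • y = b • z := by
    rw [← hab]; simpa [← sub_eq_add_neg, sub_eq_zero] using k1
  have e2 : a • y = b • z := by simpa [← sub_eq_add_neg, sub_eq_zero] using k2
  have e3 : a • z = b • z := by
    rw [← sub_eq_zero, ← sub_smul]
    exact ann _ (by rw [sub_smul, e2, e1, sub_self])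
  have e4 : (1 - a) • y = (1 - a) • z := by
    rw [hc]; rw [neg_smul] at k3; exact (neg_add_eq_zero.1 k3)
  calc y = (1 - a) • y + a • y := by rw [← add_smul]; simp
    _ = (1 - a) • z + a • z := by rw [e4, e2, e3]
    _ = z := by rw [← add_smul]; simp

end Elementwise

/-- Well-founded trees whose nodes branch over subsets of `W`, the branches carrying labels
in `C`. -/
inductive Tree (W C : Type u) : Type u
  | mk (s : Set W) (f : s → Tree W C) (t : s → C) : Tree W C

/-- Interprets a tree as an element of `M`: a node stands for some element which has the
prescribed colours relative to the elements of its branches (and for `0` if there is none). -/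
noncomputable def Tree.eval {W C M : Type u} [Zero M] (χ : M → M → C) : Tree W C → M
  | .mk s f t =>
    open Classical in
    if h : ∃ y, ∀ i : s, χ ((f i).eval χ) y = t i then h.choose else 0

/-- Erdős–Rado for triangles, without an explicit cardinal: if a colouring of pairs of
elements of `M` by `C` has no monochromatic triangle, then `M` is a quotient of a type of trees
which depends only on `C`. -/
theorem Tree.eval_surjective {C M : Type u} [Zero M] (χ : M → M → C)
    (hχ : ∀ x y z, χ x z = χ y z → χ x y = χ x z → y = z) :
    Function.Surjective (Tree.eval (W := Set C) χ) := by
  intro y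
  -- The end-homogeneous sequence below `y`, indexed by a well-order of the type `Set C`, which
  -- is too long for all its members to have different colours relative to `y`.
  let g : Set C → Tree (Set C) C := WellOrderingRel.isWellOrder.wf.fix
    fun α ih => .mk {β | WellOrderingRel β α} (fun β => ih β.1 β.2)
      (fun β => χ ((ih β.1 β.2).eval χ) y)
  have hg : ∀ α β, WellOrderingRel β α → χ ((g β).eval χ) ((g α).eval χ) =
      χ ((g β).eval χ) y := by
    intro α β hβ
    have : g α = .mk {β | WellOrderingRel β α} (fun β => g β.1)
        (fun β => χ ((g β.1).eval χ) y) := WellFounded.fix_eq _ _ _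
    rw [this, Tree.eval]
    have hex : ∃ z, ∀ i : {β | WellOrderingRel β α}, χ ((g i.1).eval χ) z =
        χ ((g i.1).eval χ) y := ⟨y, fun _ => rfl⟩
    rw [dif_pos hex]
    exact hex.choose_spec ⟨β, hβ⟩
  have hni := Function.cantor_injective fun α => χ ((g α).eval χ) y
  simp only [Function.Injective, not_forall] at hni
  obtain ⟨α, β, hc, hne⟩ := hni
  rcases trichotomous_of WellOrderingRel α β with hlt | heq | hlt
  · exact ⟨g β, hχ _ _ _ hc (hg _ _ hlt)⟩
  · exact absurd heq hne
  · exact ⟨g α, hχ _ _ _ hc.symm (hg _ _ hlt)⟩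

/-- Distributive modules over a fixed ring have bounded cardinality. -/
theorem exists_bound (R : Type u) [Ring R] : ∃ T : Type u,
    ∀ (M : Type u) [AddCommGroup M] [Module R M], ElementwiseDistributive R M →
      ∃ f : T → M, Function.Surjective f :=
  ⟨Tree (Set (Set (R × R))) (Set (R × R)), fun _ _ _ h =>
    ⟨_, Tree.eval_surjective (pairAnn R) fun _ _ _ => h.eq_of_pairAnn_eq⟩⟩

/-! ### Descending chain condition and semisimplicity -/

section Semisimple

variable {Q : Type u} [Ring Q]

/-- A semiprime ring with the minimum condition on principal left ideals: every nonzero left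
ideal `Qf` contains a nonzero idempotent generating a minimal left ideal. -/
theorem exists_minimal_idempotent
    (hmin : ∀ S : Set Q, S.Nonempty → ∃ a ∈ S, ∀ r, r * a ∈ S → ∃ s, a = s * (r * a))
    (hsp : ∀ a : Q, (∀ t, a * t * a = 0) → a = 0) {f : Q} (hf : f ≠ 0) :
    ∃ e : Q, e ≠ 0 ∧ e * e = e ∧ (∃ r, e = r * f) ∧ IsSimpleModule Q (span Q {e}) := by
  obtain ⟨a, ⟨ha0, r₀, har⟩, hmin⟩ :=
    hmin {x | x ≠ 0 ∧ ∃ r, x = r * f} ⟨f, hf, 1, (one_mul f).symm⟩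
  have hmin' : ∀ r, r * a ≠ 0 → ∃ s, a = s * (r * a) := fun r hr =>
    hmin r ⟨hr, r * r₀, by rw [har, mul_assoc]⟩
  obtain ⟨t, ht⟩ : ∃ t, a * t * a ≠ 0 := by
    by_contra! hcon; exact ha0 (hsp a hcon)
  obtain ⟨s, hs⟩ := hmin' (a * t) ht
  -- With `u = ta`, right multiplication by `u` is injective on the minimal left ideal `Qa`,
  -- and `e = tsa` satisfies `eu = u`; hence `e` is idempotent.
  have hu : (t * s * a) * (t * a) = t * a := by
    conv_rhs => rw [hs]
    noncomm_ring
  have hu0 : t * a ≠ 0 := fun h0 => ht (by rw [mul_assoc, h0, mul_zero])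
  have he0 : t * s * a ≠ 0 := fun h0 => hu0 (by rw [← hu, h0, zero_mul])
  refine ⟨t * s * a, he0, ?_, ⟨t * s * r₀, by rw [har]; noncomm_ring⟩, ?_⟩
  · by_contra hne
    have hx : (t * s * a * (t * s) - t * s) * a ≠ 0 := by
      rw [sub_mul, sub_ne_zero]; simpa [mul_assoc] using hne
    obtain ⟨s', hs'⟩ := hmin' _ hx
    have hz : (t * s * a * (t * s) - t * s) * a * (t * a) = 0 := by
      have : (t * s * a * (t * s) - t * s) * a * (t * a) =
        t * s * a * ((t * s * a) * (t * a)) - (t * s * a) * (t * a) := by noncomm_ring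
      rw [this, hu, hu, sub_self]
    apply ht
    calc a * t * a = s' * ((t * s * a * (t * s) - t * s) * a * (t * a)) := by
          have : a * t * a = s' * ((t * s * a * (t * s) - t * s) * a) * (t * a) := by
            rw [← hs', mul_assoc]
          rw [this, mul_assoc]
      _ = 0 := by rw [hz, mul_zero]
  · rw [isSimpleModule_iff_isAtom]
    refine ⟨by simpa using he0, fun N hN => ?_⟩
    by_contra hbot
    obtain ⟨x, hxN, hx0⟩ := N.exists_mem_ne_zero_of_ne_bot hbot
    obtain ⟨r, rfl⟩ := mem_span_singleton.1 (hN.le hxN)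
    rw [smul_eq_mul, ← mul_assoc] at hx0 hxN
    obtain ⟨s', hs'⟩ := hmin' _ hx0
    refine hN.not_ge ((span_singleton_le_iff_mem _ _).2 ?_)
    have : a ∈ N := hs' ▸ N.smul_mem s' hxN
    exact N.smul_mem _ this

theorem isSemisimpleRing_of_min
    (hmin : ∀ S : Set Q, S.Nonempty → ∃ a ∈ S, ∀ r, r * a ∈ S → ∃ s, a = s * (r * a))
    (hsp : ∀ a : Q, (∀ t, a * t * a = 0) → a = 0) : IsSemisimpleRing Q := by
  -- Minimise `Qf` over the idempotents `f` such that the complement `Q(1 - f)` is semisimple.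
  obtain ⟨f, ⟨hff, hss⟩, hf⟩ :=
    hmin {f | f * f = f ∧ IsSemisimpleModule Q (span Q {1 - f})} ⟨1, by simp, by
      rw [sub_self, span_zero_singleton]
      exact { exists_isCompl := fun N =>
        ⟨⊤, by rw [Subsingleton.elim N ⊥]; exact isCompl_bot_top⟩ }⟩
  by_cases hf0 : f = 0
  · have htop : span Q {1 - f} = ⊤ := by
      rw [hf0, sub_zero]; exact Ideal.span_singleton_one
    rw [htop] at hss
    exact IsSemisimpleModule.congr (topEquiv (R := Q) (M := Q)).symm
  exfalso
  obtain ⟨e, he0, hee, ⟨r, hr⟩, hsimple⟩ := exists_minimal_idempotent hmin hsp hf0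
  have hef : e * f = e := by rw [hr, mul_assoc, hff]
  have h1 : f * e * (f * e) = f * e := by
    rw [mul_assoc, ← mul_assoc e, hef, hee]
  have h2 : f * (f * e) = f * e := by rw [← mul_assoc, hff]
  have h3 : f * e * f = f * e := by rw [mul_assoc, hef]
  have hg : (1 - f * e) * f = f - f * e := by rw [sub_mul, one_mul, h3]
  obtain ⟨s, hs⟩ := hf (1 - f * e) (by
    rw [hg]
    refine ⟨by rw [sub_mul, mul_sub, mul_sub, hff, h1, h2, h3]; abel, ?_⟩
    have hle : span Q {1 - (f - f * e)} ≤ span Q {1 - f} ⊔ span Q {e} := by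
      rw [span_singleton_le_iff_mem]
      have : 1 - (f - f * e) = (1 - f) + f • e := by rw [smul_eq_mul]; abel
      rw [this]
      exact add_mem_sup (mem_span_singleton_self _)
        (smul_mem _ _ (mem_span_singleton_self _))
    have : IsSemisimpleModule Q (span Q {e}) := inferInstance
    have := IsSemisimpleModule.sup hss this
    exact IsSemisimpleModule.of_injective _ (inclusion_injective hle))
  have hfe : f * e = 0 := by
    calc f * e = f * (f * e) := h2.symm
      _ = s * ((f - f * e) * (f * e)) := by
        rw [← mul_assoc s, ← hg, ← hs]
      _ = 0 := by rw [sub_mul, h1, h2, sub_self, mul_zero]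
  exact he0 (by rw [← hee]; nth_rw 1 [← hef]; rw [mul_assoc, hfe, mul_zero])

end Semisimple

/-! ### Perfect rings: distributive modules are cyclic -/

section Perfect

variable {R : Type u} [Ring R]

/-- The minimum condition on principal right ideals, in the form of the existence of minimal
elements of nonempty subsets of `R` for the divisibility preorder `aR ⊆ bR`. -/
def MinCondition (R : Type u) [Ring R] : Prop :=
  ∀ S : Set R, S.Nonempty → ∃ a ∈ S, ∀ r, a * r ∈ S → ∃ s, a = a * r * s

theorem exists_left_inv_one_add {x : R} (hx : x ∈ Ring.jacobson R) : ∃ z, z * (1 + x) = 1 := by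
  rw [← Ideal.jacobson_bot, Ideal.mem_jacobson_iff] at hx
  obtain ⟨z, hz⟩ := hx 1
  refine ⟨z, ?_⟩
  rw [Ideal.mem_bot, sub_eq_zero] at hz
  rw [mul_add, mul_one, ← hz, mul_one, add_comm]

theorem exists_right_inv_one_add {x : R} (hx : x ∈ Ring.jacobson R) :
    ∃ z, (1 + x) * z = 1 := by
  obtain ⟨z, hz⟩ := exists_left_inv_one_add hx
  -- The left inverse `z` equals `1 - zx`, so it has a left inverse as well.
  obtain ⟨w, hw⟩ := exists_left_inv_one_add (neg_mem (Ideal.mul_mem_left _ z hx))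
  have hz' : 1 + -(z * x) = z := by
    rw [← hz]; simp only [mul_add, mul_one, add_neg_cancel_right]
  rw [hz'] at hw
  have : w = 1 + x := left_inv_eq_right_inv hw hz
  exact ⟨z, this ▸ hw⟩

theorem mem_jacobson_of_mul_mul_mem {a : R} (h : ∀ t, a * t * a ∈ Ring.jacobson R) :
    a ∈ Ring.jacobson R := by
  rw [← Ideal.jacobson_bot, Ideal.mem_jacobson_iff]
  intro y
  have := neg_mem (Ideal.mul_mem_left _ y (h y))
  obtain ⟨w, hw⟩ := exists_left_inv_one_add this
  -- `(1 - ya)(1 + ya) = 1 - y(aya)` is left invertible.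
  refine ⟨w * (1 - y * a), ?_⟩
  rw [Ideal.mem_bot, sub_eq_zero]
  refine Eq.trans ?_ hw
  noncomm_ring

theorem isSemisimpleRing_quotient_jacobson (hR : MinCondition R) :
    IsSemisimpleRing (R ⧸ Ring.jacobson R) := by
  rw [← isSemisimpleRing_mulOpposite_iff]
  apply isSemisimpleRing_of_min
  · intro S hS
    obtain ⟨a, ha, hmin⟩ := hR {r | MulOpposite.op (Ideal.Quotient.mk (Ring.jacobson R) r) ∈ S} (by
      obtain ⟨x, hx⟩ := hS
      obtain ⟨r, hr⟩ := Ideal.Quotient.mk_surjective x.unop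
      exact ⟨r, by simpa [hr] using hx⟩)
    refine ⟨_, ha, fun r hr => ?_⟩
    obtain ⟨r', hr'⟩ := Ideal.Quotient.mk_surjective r.unop
    obtain rfl : r = MulOpposite.op (Ideal.Quotient.mk _ r') := by rw [hr']; rfl
    obtain ⟨s, hs⟩ := hmin r' (by simpa using hr)
    refine ⟨MulOpposite.op (Ideal.Quotient.mk _ s), ?_⟩
    rw [← MulOpposite.op_mul, ← MulOpposite.op_mul, ← map_mul, ← map_mul, ← hs]
  · intro x hx
    obtain ⟨a, ha⟩ := Ideal.Quotient.mk_surjective x.unop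
    obtain rfl : x = MulOpposite.op (Ideal.Quotient.mk _ a) := by rw [ha]; rfl
    rw [MulOpposite.op_eq_zero_iff, Ideal.Quotient.eq_zero_iff_mem]
    refine mem_jacobson_of_mul_mul_mem fun t => ?_
    have := hx (MulOpposite.op (Ideal.Quotient.mk _ t))
    rwa [← MulOpposite.op_mul, ← MulOpposite.op_mul, ← map_mul, ← map_mul,
      MulOpposite.op_eq_zero_iff, Ideal.Quotient.eq_zero_iff_mem, ← mul_assoc] at this

/-- A form of Nakayama without finiteness: the minimum condition on principal right ideals makes
the Jacobson radical left T-nilpotent. -/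
theorem subsingleton_of_jacobson_smul_eq_top (hR : MinCondition R) {K : Type u} [AddCommGroup K]
    [Module R K] (hK : Ring.jacobson R • (⊤ : Submodule R K) = ⊤) : Subsingleton K := by
  by_contra hns
  rw [not_subsingleton_iff_nontrivial] at hns
  obtain ⟨k, hk⟩ := exists_ne (0 : K)
  obtain ⟨a, ⟨k, hk⟩, hmin⟩ := hR {a | ∃ k : K, a • k ≠ 0} ⟨1, k, by simpa using hk⟩
  obtain ⟨j, hj, m, hm⟩ : ∃ j ∈ Ring.jacobson R, ∃ m : K, a • j • m ≠ 0 := by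
    by_contra! hcon
    apply hk
    clear hk
    have hmem : k ∈ Ring.jacobson R • (⊤ : Submodule R K) := by
      rw [hK]; exact mem_top
    induction hmem using smul_induction_on' with
    | smul r hr n _ => exact hcon r hr n
    | add x _ y _ hx hy => rw [smul_add, hx, hy, add_zero]
  obtain ⟨s, hs⟩ := hmin j ⟨m, by rwa [mul_smul]⟩
  obtain ⟨z, hz⟩ := exists_right_inv_one_add (neg_mem (Ideal.mul_mem_right s _ hj))
  apply hk
  have : a = 0 := by
    calc a = a * ((1 + -(j * s)) * z) := by rw [hz, mul_one]
      _ = (a - a * j * s) * z := by noncomm_ring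
      _ = 0 := by rw [← hs, sub_self, zero_mul]
  rw [this, zero_smul]

theorem exists_generator_of_isSemisimpleRing {Q S : Type u} [Ring Q] [IsSemisimpleRing Q]
    [AddCommGroup S] [Module Q S] (hS : ElementwiseDistributive Q S) :
    ∃ x : S, span Q {x} = ⊤ := by
  -- Choose `x` with minimal annihilator.
  obtain ⟨_, ⟨x, rfl⟩, hx⟩ := WellFounded.has_min (wellFounded_lt (α := Submodule Q Q))
    (Set.range fun x : S => LinearMap.ker (LinearMap.toSpanSingleton Q S x)) (Set.range_nonempty _)
  refine ⟨x, ?_⟩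
  obtain ⟨C, hC⟩ := exists_isCompl (span Q {x})
  suffices C = ⊥ by simpa [this] using hC.sup_eq_top
  rw [eq_bot_iff]
  intro y hy
  have hdisj : ∀ z, z ∈ span Q {x} → z ∈ C → z = 0 := fun z h1 h2 =>
    disjoint_def.1 hC.disjoint z h1 h2
  obtain ⟨a, b, c, hab, hc⟩ := hS x y
  have h1 : a • x = 0 := hdisj _ (smul_mem _ _ (mem_span_singleton_self _))
    (hab ▸ C.smul_mem _ hy)
  have h2 : (1 - a) • y = 0 := hdisj _ (hc ▸ smul_mem _ _ (mem_span_singleton_self _))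
    (C.smul_mem _ hy)
  rw [sub_smul, one_smul, sub_eq_zero] at h2
  -- `a` kills `x` and fixes `y`, so `x + y` would have a smaller annihilator if `y ≠ 0`.
  by_contra hy0
  refine hx _ ⟨x + y, rfl⟩ (lt_of_le_of_ne ?_ ?_)
  · intro r hr
    simp only [LinearMap.mem_ker, LinearMap.toSpanSingleton_apply, smul_add] at hr ⊢
    refine hdisj _ (smul_mem _ _ (mem_span_singleton_self _)) ?_
    rw [add_eq_zero_iff_eq_neg.1 hr]
    exact neg_mem (C.smul_mem _ hy)
  · intro heq
    have : a ∈ LinearMap.ker (LinearMap.toSpanSingleton Q S (x + y)) := by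
      simp only [heq]; simpa using h1
    simp only [LinearMap.mem_ker, LinearMap.toSpanSingleton_apply, smul_add, h1, ← h2,
      zero_add] at this
    exact hy0 (by simpa using this)

theorem exists_generator (hR : MinCondition R) {M : Type u} [AddCommGroup M] [Module R M]
    (hM : ElementwiseDistributive R M) : ∃ x : M, span R {x} = ⊤ := by
  have := isSemisimpleRing_quotient_jacobson hR
  set J := Ring.jacobson R
  let S := M ⧸ (J • ⊤ : Submodule R M)
  have htors : Module.IsTorsionBySet R S J := by
    rintro m ⟨r, hr⟩
    obtain ⟨m, rfl⟩ := Submodule.mkQ_surjective _ m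
    change r • Submodule.mkQ _ m = 0
    rw [← map_smul, mkQ_apply, Quotient.mk_eq_zero]
    exact smul_mem_smul hr mem_top
  let _ := htors.module
  have hS : ElementwiseDistributive (R ⧸ J) S := by
    intro x y
    obtain ⟨a, b, c, h1, h2⟩ := hM.quotient (J • ⊤) x y
    refine ⟨Ideal.Quotient.mk J a, Ideal.Quotient.mk J b, Ideal.Quotient.mk J c, ?_, ?_⟩
    · simpa only [htors.mk_smul] using h1
    · rw [← map_one (Ideal.Quotient.mk J), ← map_sub]
      simpa only [htors.mk_smul] using h2
  obtain ⟨x, hx⟩ := exists_generator_of_isSemisimpleRing hS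
  obtain ⟨x, rfl⟩ := Submodule.mkQ_surjective _ x
  refine ⟨x, ?_⟩
  rw [← Submodule.Quotient.subsingleton_iff]
  refine subsingleton_of_jacobson_smul_eq_top hR (eq_top_iff.2 ?_)
  rintro k -
  obtain ⟨m, rfl⟩ := Submodule.mkQ_surjective _ k
  have hm : Submodule.mkQ (J • ⊤ : Submodule R M) m ∈ span (R ⧸ J) {mkQ (J • ⊤) x} :=
    hx ▸ mem_top
  obtain ⟨r, hr⟩ := mem_span_singleton.1 hm
  obtain ⟨r, rfl⟩ := Ideal.Quotient.mk_surjective r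
  rw [htors.mk_smul, ← map_smul, ← sub_eq_zero, ← map_sub, mkQ_apply, Quotient.mk_eq_zero] at hr
  have h1 := mem_map_of_mem (f := (span R {x}).mkQ) hr
  rw [map_smul'', Submodule.map_top, range_mkQ] at h1
  have h2 : (span R {x}).mkQ (r • x) = 0 := by
    rw [mkQ_apply, Quotient.mk_eq_zero]
    exact smul_mem _ _ (mem_span_singleton_self _)
  rw [map_sub, h2, zero_sub] at h1
  exact neg_mem_iff.1 h1

end Perfect

/-! ### Chase's argument -/

section Chase

open Classical in
theorem exists_components {R P ι : Type u} [Ring R] [AddCommGroup P] [Module R P]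
    {N : ι → Submodule R P} (hind : iSupIndep N) (htop : iSup N = ⊤) :
    ∃ π : ∀ i, P →ₗ[R] N i, ∀ p, ∃ F : Finset ι, (∀ i ∉ F, π i p = 0) ∧
      p = ∑ i ∈ F, (π i p : P) := by
  have hint := (DirectSum.isInternal_submodule_iff_iSupIndep_and_iSup_eq_top N).2 ⟨hind, htop⟩
  let e := LinearEquiv.ofBijective (DirectSum.coeLinearMap N) hint
  refine ⟨fun i => (DirectSum.component R ι (fun i => N i) i).comp e.symm.toLinearMap,
    fun p => ⟨(e.symm p).support, fun i hi => DFinsupp.notMem_support_iff.1 hi, ?_⟩⟩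
  conv_lhs => rw [← e.apply_symm_apply p]
  exact DirectSum.coeLinearMap_eq_dfinsuppSum N _

/-- If all `R`-modules are semidistributive then descending chains of principal right ideals
stabilise. The module decomposed is `∏_{n ∈ ℕ} R^(List T)`, where `T` bounds the cardinality
of distributive modules; by Chase's argument, for some `n`, almost all components of elements of
`aₙ P` supported in the `n`-th factor are divisible by `aₙ₊₁`, so there are too few remaining
components to separate the elements of `aₙ R^(List T)` modulo `aₙ₊₁ R^(List T)`. -/
theorem chain_stabilises (R : Type u) [Ring R]
    (h : ∀ (M : Type u) [AddCommGroup M] [Module R M],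
      ∃ (ι : Type u) (N : ι → Submodule R M),
        iSupIndep N ∧ iSup N = ⊤ ∧ ∀ i, ElementwiseDistributive R (N i))
    (a : ℕ → R) (ha : ∀ n, ∃ r, a (n + 1) = a n * r) : ∃ n s, a n = a (n + 1) * s := by
  classical
  by_contra! H
  have hdiv : ∀ k n, k ≤ n → ∃ s, a n = a k * s := by
    intro k n hkn
    induction n, hkn using Nat.le_induction with
    | base => exact ⟨1, (mul_one _).symm⟩
    | succ n _ ih =>
      obtain ⟨s, hs⟩ := ih
      obtain ⟨r, hr⟩ := ha n
      exact ⟨s * r, by rw [hr, hs, mul_assoc]⟩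
  obtain ⟨T, hT⟩ := exists_bound R
  obtain ⟨ι, N, hind, htop, hN⟩ := h (ℕ → List T → R)
  obtain ⟨π, hπ⟩ := exists_components hind htop
  choose supp hsupp hsum using hπ
  obtain ⟨n, F, hF⟩ : ∃ (n : ℕ) (F : Finset ι), ∀ q : List T → R, ∀ i ∉ F,
      ∃ z, π i (a n • Pi.single n q) = a (n + 1) • z := by
    by_contra! hcon
    choose q i hi hz using hcon
    -- `F n` contains the supports of the first `n` chosen elements.
    let F : ℕ → Finset ι := fun n => Nat.rec ∅
      (fun n Fn => Fn ∪ supp (a n • Pi.single n (q n Fn))) n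
    have hFs : ∀ n, F (n + 1) = F n ∪ supp (a n • Pi.single n (q n (F n))) := fun n => rfl
    have hmono : Monotone F := monotone_nat_of_le_succ fun n => by
      rw [hFs]; exact Finset.subset_union_left
    have hzero : ∀ j k, j < k → π (i k (F k)) (a j • Pi.single j (q j (F j))) = 0 := by
      intro j k hjk
      refine hsupp _ _ fun hmem => hi k (F k) (hmono (Nat.succ_le_of_lt hjk) ?_)
      rw [Nat.succ_eq_add_one, hFs]
      exact Finset.mem_union_right _ hmem
    have hmem : ∀ k, i k (F k) ∈ F (k + 1) := by
      intro k
      rw [hFs]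
      refine Finset.mem_union_right _ ?_
      by_contra hnot
      exact hz k (F k) 0 (by rw [hsupp _ _ hnot, smul_zero])
    have hinj : Function.Injective fun k => i k (F k) := by
      intro j k hjk
      have hjk : i j (F j) = i k (F k) := hjk
      by_contra hne
      rcases lt_or_gt_of_ne hne with hlt | hlt
      · exact hi k (F k) (hmono (Nat.succ_le_of_lt hlt) (by rw [← hjk]; exact hmem j))
      · exact hi j (F j) (hmono (Nat.succ_le_of_lt hlt) (by rw [hjk]; exact hmem k))
    let p : ℕ → List T → R := fun n => a n • q n (F n)
    have hp : ∀ k, i k (F k) ∈ supp p := by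
      intro k
      by_contra hnot
      choose! s hs using fun n => hdiv (k + 1) n
      let rest : ℕ → List T → R := fun n => if k + 1 ≤ n then s n • q n (F n) else 0
      have hdecomp : p = ∑ j ∈ Finset.range k, a j • (Pi.single j (q j (F j)) : ℕ → List T → R) +
          a k • (Pi.single k (q k (F k)) : ℕ → List T → R) + a (k + 1) • rest := by
        rw [← Finset.sum_range_succ fun j => a j •
          (Pi.single j (q j (F j)) : ℕ → List T → R)]
        funext n
        simp only [Pi.add_apply, Finset.sum_apply, Pi.smul_apply, p, rest]
        by_cases hn : k + 1 ≤ n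
        · rw [Finset.sum_eq_zero, if_pos hn, zero_add, ← mul_smul, ← hs n hn]
          intro j hj
          rw [Pi.single_eq_of_ne (by have := Finset.mem_range.1 hj; omega), smul_zero]
        · rw [if_neg hn, smul_zero, add_zero, Finset.sum_eq_single n]
          · rw [Pi.single_eq_same]
          · intro j _ hj
            rw [Pi.single_eq_of_ne hj.symm, smul_zero]
          · intro hn'
            exact absurd (Finset.mem_range.2 (by omega)) hn'
      have h0 := hsupp _ _ hnot
      rw [hdecomp, map_add, map_add, map_sum,
        Finset.sum_eq_zero fun j hj => hzero j k (Finset.mem_range.1 hj), zero_add,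
        map_smul _ (a (k + 1))] at h0
      exact hz k (F k) (-π (i k (F k)) rest) (by rw [smul_neg]; exact eq_neg_of_add_eq_zero_left h0)
    exact Set.infinite_range_of_injective hinj
      ((supp p).finite_toSet.subset (Set.range_subset_iff.2 hp))
  -- Characteristic functions of subsets of `List T` are separated by the components in `F`.
  choose f hf using fun i => hT (N i) (hN i)
  let q : Set (List T) → List T → R := fun S x => if x ∈ S then 1 else 0
  let Φ : Set (List T) → F → T := fun S i =>
    Function.surjInv (hf i) (π i (a n • Pi.single n (q S)))
  have hΦ : Function.Injective Φ := by
    intro S S' hSS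
    have hcomp : ∀ i, ∃ z, π i (a n • Pi.single n (q S - q S')) = a (n + 1) • z := by
      intro i
      by_cases hi : i ∈ F
      · refine ⟨0, ?_⟩
        have := Function.injective_surjInv (hf i) (congrFun hSS ⟨i, hi⟩)
        rw [Pi.single_sub, smul_sub, map_sub, this, sub_self, smul_zero]
      · exact hF _ i hi
    choose z hz using hcomp
    have heq : a n • (Pi.single n (q S - q S') : ℕ → List T → R) = a (n + 1) •
        ∑ i ∈ supp (a n • Pi.single n (q S - q S')), (z i : ℕ → List T → R) := by
      refine (hsum _).trans ?_
      rw [Finset.smul_sum]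
      exact Finset.sum_congr rfl fun i _ => by rw [hz]; rfl
    ext x
    have hx := congrFun (congrFun heq n) x
    simp only [Pi.smul_apply, Pi.single_eq_same, Pi.sub_apply, smul_eq_mul, q] at hx
    by_cases h1 : x ∈ S <;> by_cases h2 : x ∈ S'
    · simp [h1, h2]
    · rw [if_pos h1, if_neg h2, sub_zero, mul_one] at hx
      exact absurd hx (H _ _)
    · rw [if_neg h1, if_pos h2, zero_sub, mul_neg, mul_one, neg_eq_iff_eq_neg, ← mul_neg] at hx
      exact absurd hx (H _ _)
    · simp [h1, h2]
  refine Function.cantor_injective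
    (fun S => List.ofFn (fun j => Φ S (F.equivFin.symm j))) fun S S' hSS => hΦ ?_
  have := List.ofFn_injective hSS
  funext i
  simpa using congrFun this (F.equivFin i)

theorem minCondition (R : Type u) [Ring R]
    (h : ∀ (M : Type u) [AddCommGroup M] [Module R M],
      ∃ (ι : Type u) (N : ι → Submodule R M),
        iSupIndep N ∧ iSup N = ⊤ ∧ ∀ i, ElementwiseDistributive R (N i)) :
    MinCondition R := by
  rintro S ⟨a₀, ha₀⟩
  by_contra! hcon
  choose! r hr hs using hcon
  let a : ℕ → S := fun n => Nat.rec ⟨a₀, ha₀⟩ (fun _ x => ⟨x.1 * r x.1, hr x.1 x.2⟩) n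
  obtain ⟨n, s, hn⟩ := chain_stabilises R h (fun n => (a n).1) fun n => ⟨r (a n).1, rfl⟩
  exact hs (a n).1 (a n).2 s hn

end Chase

/-! ### Invariance under equivalence -/

section Transfer

variable {R S : Type u} [Ring R] [Ring S]

theorem isDistributiveModule_iff {M : Type u} [AddCommGroup M] [Module R M] (N : Submodule R M) :
    IsDistributiveModule R N ↔ ∀ X ≤ N, ∀ Y ≤ N, ∀ Z ≤ N, X ⊓ (Y ⊔ Z) = X ⊓ Y ⊔ X ⊓ Z := by
  have hinj := map_injective_of_injective N.injective_subtype
  constructor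
  · intro h X hX Y hY Z hZ
    have := congrArg (map N.subtype) (h (comap N.subtype X) (comap N.subtype Y)
      (comap N.subtype Z))
    simpa only [Submodule.map_inf _ N.injective_subtype, Submodule.map_sup, map_comap_subtype,
      inf_eq_right.2 hX, inf_eq_right.2 hY, inf_eq_right.2 hZ] using this
  · intro h X Y Z
    apply hinj
    simpa only [Submodule.map_inf _ N.injective_subtype, Submodule.map_sup] using
      h _ (map_subtype_le N X) _ (map_subtype_le N Y) _ (map_subtype_le N Z)

open CategoryTheory in
/-- Corresponding modules under an equivalence have isomorphic submodule lattices. -/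
noncomputable def submoduleOrderIso (e : ModuleCat.{u} R ≌ ModuleCat.{u} S) (M : ModuleCat.{u} R) :
    Submodule R M ≃o Submodule S (e.functor.obj M) :=
  (ModuleCat.subobjectModule M).symm.trans
    ((Subobject.lowerEquivalence (MonoOver.congr M e)).toOrderIso.trans
      (ModuleCat.subobjectModule _))

open CategoryTheory in
theorem semidistributive_transfer (e : ModuleCat.{u} R ≌ ModuleCat.{u} S)
    (h : ∀ (M : Type u) [AddCommGroup M] [Module R M],
      ∃ (ι : Type u) (T : ι → Submodule R M),
        iSupIndep T ∧ iSup T = ⊤ ∧ ∀ i, IsDistributiveModule R (T i))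
    (M : Type u) [AddCommGroup M] [Module S M] :
    ∃ (ι : Type u) (T : ι → Submodule S M),
        iSupIndep T ∧ iSup T = ⊤ ∧ ∀ i, IsDistributiveModule S (T i) := by
  let φ : Submodule S M ≃o Submodule R (e.inverse.obj (ModuleCat.of S M)) :=
    submoduleOrderIso e.symm (ModuleCat.of S M)
  obtain ⟨ι, T, hind, htop, hT⟩ := h (e.inverse.obj (ModuleCat.of S M))
  refine ⟨ι, fun i => φ.symm (T i), hind.map_orderIso φ.symm, ?_, fun i => ?_⟩
  · rw [← φ.symm.map_iSup, htop, OrderIso.map_top]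
  · rw [isDistributiveModule_iff]
    intro X hX Y hY Z hZ
    apply φ.injective
    simp only [OrderIso.map_inf, OrderIso.map_sup]
    exact (isDistributiveModule_iff _).1 (hT i) _ (φ.le_symm_apply.1 hX) _
      (φ.le_symm_apply.1 hY) _ (φ.le_symm_apply.1 hZ)

end Transfer

end Semidistributive

theorem stmt9 (A : Type u) [Ring A]
    (h : ∀ (M : Type u) [AddCommGroup M] [Module Aᵐᵒᵖ M],
      ∃ (ι : Type u) (T : ι → Submodule Aᵐᵒᵖ M),
        iSupIndep T ∧ iSup T = ⊤ ∧ ∀ i, IsDistributiveModule Aᵐᵒᵖ (T i)) :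
    ∀ (B : Type u) [Ring B],
      Nonempty (CategoryTheory.Equivalence (ModuleCat.{u} Aᵐᵒᵖ) (ModuleCat.{u} Bᵐᵒᵖ)) →
        ∀ (M : Type u) [AddCommGroup M] [Module Bᵐᵒᵖ M],
          ∃ (ι : Type u) (T : ι → Submodule Bᵐᵒᵖ M),
            iSupIndep T ∧ iSup T = ⊤ ∧ ∀ i, ∃ m : M, T i = span Bᵐᵒᵖ {m} := by
  intro B _ ⟨e⟩ M _ _
  have hB := Semidistributive.semidistributive_transfer e h
  have hmin := Semidistributive.minCondition Bᵐᵒᵖ fun M _ _ => by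
    obtain ⟨ι, T, hind, htop, hT⟩ := hB M
    exact ⟨ι, T, hind, htop, fun i => Semidistributive.elementwiseDistributive (hT i)⟩
  obtain ⟨ι, T, hind, htop, hT⟩ := hB M
  refine ⟨ι, T, hind, htop, fun i => ?_⟩
  obtain ⟨x, hx⟩ := Semidistributive.exists_generator hmin
    (Semidistributive.elementwiseDistributive (hT i))
  refine ⟨x, ?_⟩
  simpa [map_span] using (congrArg (map (T i).subtype) hx).symm
end

section
/- Let A be a ring satisfying the minimum condition on principal left ideals (i.e., A is right perfect). Then every ℵ₀-distributive right A-module is Noetherian. -/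
/-!
The theorem is Bass's description of right perfect rings combined with a counting argument.

Let `J` be the Jacobson radical of `A`. The minimum condition on principal left ideals gives
two facts.

* `A ⧸ J` is semisimple (`MinElt.isSemisimpleRing`): the condition passes to `A ⧸ J`, and in a ring
  with zero radical every minimal left ideal is a direct summand, so a minimal principal summand
  with semisimple complement must vanish.
* Nakayama's lemma holds for arbitrary right modules: `X J = X` forces `X = 0`
  (`subsingleton_of_radical_smul_top`).

For a submodule `N` of `M`, the module `N / NJ` is then semisimple with finitely many isotypic
components. A component that is not finitely generated would be a subfactor of `M` that is an
infinite direct sum of isomorphic simple modules. So `N / NJ` is finitely generated, and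
Nakayama's lemma gives that `N` is finitely generated.
-/

universe u

open Submodule

/-! ### Semisimplicity modulo the radical -/

/-- The minimum condition on principal left ideals in elementwise form: every nonempty set `S` has
an element `b` such that no element of `S ∩ B b` generates a smaller left ideal than `b`. -/
def MinElt (B : Type*) [Ring B] : Prop :=
  ∀ S : Set B, S.Nonempty → ∃ b ∈ S, ∀ r : B, r * b ∈ S → ∃ t : B, b = t * (r * b)

lemma MinPrincipalLeft.minElt {A : Type u} [Ring A] (hA : MinPrincipalLeft A) : MinElt A := by
  intro S hS
  have wf : WellFounded fun x y : A ↦ span A ({x} : Set A) < span A ({y} : Set A) := by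
    rw [wellFounded_iff_isEmpty_descending_chain]
    exact ⟨fun ⟨f, hf⟩ ↦ hA ⟨f, strictAnti_nat_of_succ_lt hf⟩⟩
  obtain ⟨b, hb, hmin⟩ := wf.has_min S hS
  refine ⟨b, hb, fun r hr ↦ ?_⟩
  have hle : span A ({r * b} : Set A) ≤ span A ({b} : Set A) := by
    rw [span_singleton_le_iff_mem, mem_span_singleton]
    exact ⟨r, rfl⟩
  have heq := eq_of_le_of_not_lt hle (hmin _ hr)
  have hmem : b ∈ span A ({r * b} : Set A) := heq ▸ mem_span_singleton_self b
  obtain ⟨t, ht⟩ := mem_span_singleton.1 hmem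
  exact ⟨t, ht.symm⟩

lemma MinElt.of_surjective {A B : Type*} [Ring A] [Ring B] (h : MinElt A) (f : A →+* B)
    (hf : Function.Surjective f) : MinElt B := by
  intro S ⟨s, hs⟩
  obtain ⟨s, rfl⟩ := hf s
  obtain ⟨b, hb, hmin⟩ := h (f ⁻¹' S) ⟨s, hs⟩
  refine ⟨f b, hb, fun r hr ↦ ?_⟩
  obtain ⟨r, rfl⟩ := hf r
  obtain ⟨t, ht⟩ := hmin r (by simpa using hr)
  exact ⟨f t, by rw [← map_mul, ← map_mul, ← ht]⟩

lemma isPrincipal_of_isCompl {B : Type*} [Ring B] {D E : Ideal B} (h : IsCompl D E) :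
    ∃ d : B, D = span B {d} := by
  obtain ⟨f, -, rfl⟩ := D.isIdempotentElemEquiv.symm (D.isComplEquivProj ⟨E, h⟩)
  exact ⟨f 1, by
    rw [LinearMap.range_eq_map, ← Ideal.span_one, ← Ideal.submodule_span_eq, LinearMap.map_span,
      Set.image_one]⟩

lemma MinElt.isSemisimpleRing {B : Type*} [Ring B] (h : MinElt B) (hJ : Ring.jacobson B = ⊥) :
    IsSemisimpleRing B := by
  obtain ⟨b, ⟨C, hC, hCs⟩, hmin⟩ :=
    h {b | ∃ C : Ideal B, IsCompl (span B {b}) C ∧ IsSemisimpleModule B C}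
      ⟨1, ⊥, by
        rw [show span B ({1} : Set B) = ⊤ from Ideal.span_singleton_one]
        exact ⟨isCompl_top_bot, { exists_isCompl := fun X ↦ ⟨⊤, by rw [Subsingleton.elim X ⊥]; exact isCompl_bot_top⟩ }⟩⟩
  by_cases hb : b = 0
  · subst hb
    have : C = ⊤ := by simpa using hC.sup_eq_top
    subst this
    exact IsSemisimpleModule.congr (Submodule.topEquiv (R := B) (M := B)).symm
  exfalso
  -- `B x` is a minimal left ideal inside `B b`, by minimality of `x`.
  obtain ⟨x, ⟨hx0, hxb⟩, hxmin⟩ := h {x | x ≠ 0 ∧ x ∈ span B {b}} ⟨b, hb, mem_span_singleton_self b⟩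
  have key : ∀ y ∈ span B {x}, y ≠ 0 → ∃ t : B, x = t * y := by
    intro y hy hy0
    obtain ⟨r, rfl⟩ := mem_span_singleton.1 hy
    exact hxmin r ⟨hy0, Submodule.smul_mem _ _ hxb⟩
  have hxs : IsSimpleModule B (span B {x}) := by
    rw [isSimpleModule_iff_isAtom, ← bot_covBy_iff]
    refine ⟨bot_lt_iff_ne_bot.2 (by simpa using hx0), fun I hI hlt ↦ ?_⟩
    obtain ⟨y, hy, hy0⟩ := Submodule.exists_mem_ne_zero_of_ne_bot hI.ne'
    obtain ⟨t, ht⟩ := key y (hlt.le hy) hy0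
    exact hlt.not_ge ((span_singleton_le_iff_mem _ _).2 (ht ▸ I.smul_mem t hy))
  obtain ⟨m, hm, hxm⟩ : ∃ m : Ideal B, m.IsMaximal ∧ x ∉ m := by
    by_contra! hcon
    have : x ∈ Ring.jacobson B := by
      rw [Ring.jacobson_eq_sInf_isMaximal, Submodule.mem_sInf]
      exact fun m hm ↦ hcon m hm
    rw [hJ] at this
    exact hx0 (by simpa using this)
  have hdis : Disjoint m (span B {x}) := by
    rw [Submodule.disjoint_def]
    intro y hym hy
    by_contra hy0
    obtain ⟨t, ht⟩ := key y hy hy0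
    exact hxm (ht ▸ m.mul_mem_left t hym)
  have hsup : m ⊔ span B {x} = ⊤ := by
    refine hm.out.2 _ (lt_of_le_of_ne le_sup_left fun he ↦ hxm ?_)
    rw [he]
    exact Submodule.mem_sup_right (mem_span_singleton_self x)
  -- Removing the summand `B x` from `B b` leaves a smaller summand with semisimple complement.
  have hD : (span B {b} ⊓ m) ⊔ span B {x} = span B {b} := by
    rw [inf_sup_assoc_of_le m ((span_singleton_le_iff_mem _ _).2 hxb), hsup, inf_top_eq]
  have hcompl : IsCompl (span B {b} ⊓ m) (span B {x} ⊔ C) := by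
    constructor
    · apply (hdis.mono_left inf_le_right).disjoint_sup_right_of_disjoint_sup_left
      rw [hD]
      exact hC.disjoint
    · rw [codisjoint_iff, ← sup_assoc, hD, hC.sup_eq_top]
  obtain ⟨d, hd⟩ := isPrincipal_of_isCompl hcompl
  have hdm : d ∈ span B {b} ⊓ m := hd ▸ mem_span_singleton_self d
  obtain ⟨r, rfl⟩ := mem_span_singleton.1 hdm.1
  obtain ⟨t, ht⟩ := hmin r ⟨span B {x} ⊔ C, hd ▸ hcompl,
    IsSemisimpleModule.sup inferInstance hCs⟩
  have hbm : b ∈ m := ht ▸ m.mul_mem_left t hdm.2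
  exact hxm ((span_singleton_le_iff_mem _ _).2 hbm hxb)

/-! ### The radical acting on right modules and Nakayama's lemma -/

/-- The Jacobson radical of `A`, viewed as an ideal of `Aᵐᵒᵖ`; being the kernel of the ring
homomorphism `Aᵐᵒᵖ → (A ⧸ J)ᵐᵒᵖ`, it is two-sided. -/
def opRadical (A : Type*) [Ring A] : Ideal Aᵐᵒᵖ :=
  RingHom.ker (RingHom.op (Ideal.Quotient.mk (Ring.jacobson A)))

instance (A : Type*) [Ring A] : (opRadical A).IsTwoSided := by
  unfold opRadical; infer_instance

lemma op_mem_opRadical {A : Type*} [Ring A] {a : A} :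
    MulOpposite.op a ∈ opRadical A ↔ a ∈ Ring.jacobson A := by
  simp [opRadical, RingHom.mem_ker, Ideal.Quotient.eq_zero_iff_mem]

lemma isSemisimpleRing_quotient_opRadical {A : Type*} [Ring A] (hA : MinElt A) :
    IsSemisimpleRing (Aᵐᵒᵖ ⧸ opRadical A) := by
  have : IsSemisimpleRing (A ⧸ Ring.jacobson A) :=
    (hA.of_surjective _ Ideal.Quotient.mk_surjective).isSemisimpleRing
      (Ring.jacobson_quotient_jacobson A)
  have hs : Function.Surjective (RingHom.op (Ideal.Quotient.mk (Ring.jacobson A))) := by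
    intro y
    obtain ⟨a, ha⟩ := Ideal.Quotient.mk_surjective y.unop
    exact ⟨MulOpposite.op a, MulOpposite.unop_injective (by simpa using ha)⟩
  exact (RingHom.quotientKerEquivOfSurjective hs).symm.isSemisimpleRing

/-- Nakayama's lemma for arbitrary, not necessarily finitely generated, right modules. -/
lemma subsingleton_of_radical_smul_top {A : Type*} [Ring A] (hA : MinElt A) {X : Type*}
    [AddCommGroup X] [Module Aᵐᵒᵖ X] (h : opRadical A • (⊤ : Submodule Aᵐᵒᵖ X) = ⊤) :
    Subsingleton X := by
  by_contra hX
  rw [not_subsingleton_iff_nontrivial] at hX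
  obtain ⟨x, hx⟩ := exists_ne (0 : X)
  -- `b` generates a minimal left ideal among the elements with `X b ≠ 0`.
  obtain ⟨b, ⟨y, hy⟩, hmin⟩ := hA {b | ∃ x : X, MulOpposite.op b • x ≠ 0} ⟨1, x, by simpa using hx⟩
  obtain ⟨a, ha, z, hz⟩ : ∃ a ∈ Ring.jacobson A, ∃ z : X, MulOpposite.op (a * b) • z ≠ 0 := by
    by_contra! hcon
    have hy' : y ∈ opRadical A • (⊤ : Submodule Aᵐᵒᵖ X) := by rw [h]; exact mem_top
    refine hy ?_
    induction hy' using Submodule.smul_induction_on' with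
    | smul r hr n hn =>
      have := hcon r.unop (op_mem_opRadical.1 hr) n
      rwa [MulOpposite.op_mul, mul_smul] at this
    | add p _ q _ hp hq =>
      rw [smul_add]
      by_cases hp0 : MulOpposite.op b • p = 0
      · by_cases hq0 : MulOpposite.op b • q = 0
        · rw [hp0, hq0, add_zero]
        · exact absurd (hq hq0) hq0
      · exact absurd (hp hp0) hp0
  obtain ⟨c, hc⟩ := hmin a ⟨z, hz⟩
  -- Now `(1 - c a) b = 0` although `1 - c a` is left invertible.
  obtain ⟨u, hu⟩ := Ideal.mem_jacobson_iff.1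
    (show a ∈ Ideal.jacobson (⊥ : Ideal A) by rwa [Ideal.jacobson_bot]) (-c)
  have hu' : u * -c * a + u = 1 := sub_eq_zero.1 (by simpa using hu)
  have hb : b = 0 := by
    calc b = (u * -c * a + u) * b := by rw [hu', one_mul]
      _ = u * (b - c * (a * b)) := by noncomm_ring
      _ = 0 := by rw [← hc, sub_self, mul_zero]
  exact hy (by simp [hb])

/-! ### Finiteness of semisimple subfactors -/

lemma isSemisimpleModule_of_torsion {R : Type*} [Ring R] (I : Ideal R) [I.IsTwoSided]
    [IsSemisimpleRing (R ⧸ I)] {Q : Type*} [AddCommGroup Q] [Module R Q]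
    (hQ : Module.IsTorsionBySet R Q I) : IsSemisimpleModule R Q :=
  letI := hQ.module
  hQ.isSemisimpleModule_iff.1 inferInstance

/-- A module over `R` killed by `I` has only finitely many isotypic components when `R ⧸ I` is
semisimple, because each simple submodule embeds in `R ⧸ I`, which has finitely many. -/
lemma finite_isotypicComponents_of_torsion {R : Type*} [Ring R] (I : Ideal R) [I.IsTwoSided]
    [IsSemisimpleRing (R ⧸ I)] {Q : Type*} [AddCommGroup Q] [Module R Q]
    (hQ : Module.IsTorsionBySet R Q I) : Finite (isotypicComponents R Q) := by
  have hself : Module.IsTorsionBySet R (R ⧸ I) I :=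
    fun x ⟨r, hr⟩ ↦ by
      obtain ⟨x, rfl⟩ := Ideal.Quotient.mk_surjective x
      exact Ideal.Quotient.eq_zero_iff_mem.2 (I.mul_mem_right x hr)
  have := isSemisimpleModule_of_torsion I hself
  have emb : ∀ X : Submodule R Q, IsSimpleModule R X →
      ∃ Y : Submodule R (R ⧸ I), Nonempty (Y ≃ₗ[R] X) := by
    intro X hX
    have := IsSimpleModule.nontrivial R X
    obtain ⟨x, hx⟩ := exists_ne (0 : X)
    let f : (R ⧸ I) →ₗ[R] X := Submodule.liftQ I (LinearMap.toSpanSingleton R X x) (by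
      intro r hr
      exact Subtype.ext (@hQ (x : Q) ⟨r, hr⟩))
    have hf : Function.Surjective f := by
      intro y
      obtain ⟨r, rfl⟩ := IsSimpleModule.toSpanSingleton_surjective R hx y
      exact ⟨Submodule.Quotient.mk r, rfl⟩
    obtain ⟨Y, ⟨e⟩⟩ := IsSemisimpleModule.exists_submodule_linearEquiv_quotient (LinearMap.ker f)
    exact ⟨Y, ⟨e.trans (f.quotKerEquivOfSurjective hf)⟩⟩
  have hc : ∀ c : isotypicComponents R Q, ∃ (X : Submodule R Q) (Y : Submodule R (R ⧸ I)),
      IsSimpleModule R X ∧ IsSimpleModule R Y ∧ c.1 = isotypicComponent R Q X ∧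
        Nonempty (Y ≃ₗ[R] X) := by
    rintro ⟨c, X, hX, rfl⟩
    obtain ⟨Y, ⟨e⟩⟩ := emb X hX
    exact ⟨X, Y, hX, IsSimpleModule.congr e, rfl, ⟨e⟩⟩
  choose X Y hX hY hcX e using hc
  refine Finite.of_injective
    (fun c ↦ (⟨isotypicComponent R (R ⧸ I) (Y c), Y c, hY c, rfl⟩ :
      isotypicComponents R (R ⧸ I))) fun c d hcd ↦ Subtype.ext ?_
  have heq : isotypicComponent R (R ⧸ I) (Y c) = isotypicComponent R (R ⧸ I) (Y d) :=
    congrArg Subtype.val hcd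
  have := hY c
  have := hY d
  have hle : Y c ≤ isotypicComponent R (R ⧸ I) (Y d) := heq ▸ (Y c).le_isotypicComponent
  have iso : Nonempty (Y c ≃ₗ[R] Y d) :=
    isIsotypicOfType_submodule_iff.1 (IsIsotypicOfType.isotypicComponent R (R ⧸ I) (Y d)) _ hle
  rw [hcX c, hcX d]
  exact ((e c).some.symm.trans (iso.some.trans (e d).some)).isotypicComponent_eq

/-- An isotypic semisimple quotient of a submodule of an `ℵ₀`-distributive module is finitely
generated. -/
lemma IsAleph0Distributive.finite_of_isotypic {R M : Type u} [Ring R] [AddCommGroup M] [Module R M]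
    (hM : IsAleph0Distributive R M) (N : Submodule R M) {Q : Type u} [AddCommGroup Q]
    [Module R Q] [IsSemisimpleModule R Q] (hQ : IsIsotypic R Q) (g : N →ₗ[R] Q)
    (hg : Function.Surjective g) : Module.Finite R Q := by
  obtain ⟨s, hind, hsup, hsim⟩ := IsSemisimpleModule.exists_sSupIndep_sSup_simples_eq_top R Q
  rcases s.finite_or_infinite with hs | hs
  · refine ⟨?_⟩
    rw [← hsup, sSup_eq_iSup]
    refine Submodule.fg_biSup hs.toFinset _ (fun m hm ↦ ?_) |> fun h ↦ by simpa using h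
    have := hsim m (by simpa using hm)
    exact Module.Finite.iff_fg.1 inferInstance
  · exfalso
    let e := g.quotKerEquivOfSurjective hg
    let o := Submodule.orderIsoMapComap e.symm
    have eT (i : s) : o i.1 ≃ₗ[R] i.1 := (e.symm.submoduleMap i.1).symm
    refine hM ⟨N, LinearMap.ker g, s, hs.to_subtype, fun i ↦ o i.1, ?_, ?_, fun i ↦ ?_,
      fun i j ↦ ?_⟩
    · exact (iSupIndep_map_orderIso_iff o).2 ((sSupIndep_iff s).1 hind)
    · rw [← o.map_iSup, ← sSup_eq_iSup', hsup, o.map_top]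
    · have := hsim i.1 i.2
      exact IsSimpleModule.congr (eT i)
    · have := hsim i.1 i.2
      have := hsim j.1 j.2
      exact ⟨(eT i).trans ((hQ j.1 i.1).some.trans (eT j).symm)⟩

/-- A quotient of a submodule of an `ℵ₀`-distributive module that is killed by an ideal with
semisimple quotient ring is finitely generated, as it has finitely many isotypic components. -/
lemma IsAleph0Distributive.finite_of_torsion {R M : Type u} [Ring R] [AddCommGroup M] [Module R M]
    (hM : IsAleph0Distributive R M) (N : Submodule R M) (I : Ideal R) [I.IsTwoSided]
    [IsSemisimpleRing (R ⧸ I)] {Q : Type u} [AddCommGroup Q] [Module R Q]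
    (hQ : Module.IsTorsionBySet R Q I) (g : N →ₗ[R] Q) (hg : Function.Surjective g) :
    Module.Finite R Q := by
  have := isSemisimpleModule_of_torsion I hQ
  have hfin := finite_isotypicComponents_of_torsion I hQ
  refine ⟨?_⟩
  rw [← sSup_isotypicComponents R Q, sSup_eq_iSup']
  refine Submodule.fg_iSup _ fun c ↦ ?_
  -- Being a direct summand of `Q`, the component `c` is a quotient of `N`.
  obtain ⟨d, hcd⟩ := exists_isCompl c.1
  have := hM.finite_of_isotypic N (Q := c.1) (.isotypicComponents c.2)
    ((c.1.projectionOnto d hcd).comp g) ((Submodule.projectionOnto_surjective hcd).comp hg)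
  exact Module.Finite.iff_fg.1 this

lemma finite_quotient_radical {A : Type u} [Ring A] (hA : MinElt A)
    {M : Type u} [AddCommGroup M] [Module Aᵐᵒᵖ M] (hM : IsAleph0Distributive Aᵐᵒᵖ M)
    (N : Submodule Aᵐᵒᵖ M) :
    Module.Finite Aᵐᵒᵖ (N ⧸ (opRadical A • (⊤ : Submodule Aᵐᵒᵖ N))) :=
  have := isSemisimpleRing_quotient_opRadical hA
  hM.finite_of_torsion N (opRadical A) (Module.isTorsionBySet_quotient_ideal_smul N (opRadical A))
    (Submodule.mkQ _) (Submodule.mkQ_surjective _)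

/-! ### Lifting generators modulo the radical -/

lemma finite_of_finite_quotient_radical {A : Type*} [Ring A] (hA : MinElt A) {N : Type*}
    [AddCommGroup N] [Module Aᵐᵒᵖ N]
    (h : Module.Finite Aᵐᵒᵖ (N ⧸ (opRadical A • (⊤ : Submodule Aᵐᵒᵖ N)))) :
    Module.Finite Aᵐᵒᵖ N := by
  set P := opRadical A • (⊤ : Submodule Aᵐᵒᵖ N) with hP
  obtain ⟨s, hs⟩ := h.fg_top
  classical
  let F : Submodule Aᵐᵒᵖ N := span Aᵐᵒᵖ (s.image Quotient.out : Finset N)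
  have hmap : F.map P.mkQ = ⊤ := by
    rw [Submodule.map_span, Finset.coe_image, Set.image_image, ← hs]
    congr 1
    exact (Set.image_congr fun x _ ↦ Quotient.out_eq x).trans (Set.image_id' _)
  have hsup : P ⊔ F = ⊤ := by
    have := congrArg (Submodule.comap P.mkQ) hmap
    rwa [Submodule.comap_map_mkQ, Submodule.comap_top] at this
  have hsub : Subsingleton (N ⧸ F) := by
    refine subsingleton_of_radical_smul_top hA ?_
    have h1 := congrArg (Submodule.map F.mkQ) hsup
    rwa [Submodule.map_sup, Submodule.mkQ_map_self, sup_bot_eq, hP, Submodule.map_smul'',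
      Submodule.map_top, Submodule.range_mkQ] at h1
  have hF : F = ⊤ := Submodule.Quotient.subsingleton_iff.1 hsub
  exact ⟨hF ▸ ⟨_, rfl⟩⟩

theorem stmt13 (A : Type u) [Ring A] (hA : MinPrincipalLeft A)
    (M : Type u) [AddCommGroup M] [Module Aᵐᵒᵖ M] (hM : IsAleph0Distributive Aᵐᵒᵖ M) :
    IsNoetherian Aᵐᵒᵖ M :=
  ⟨fun N ↦ Module.Finite.iff_fg.1 <|
    finite_of_finite_quotient_radical hA.minElt (finite_quotient_radical hA.minElt hM N)⟩
end
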